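/- Correctness of the declassification-aware dependency encoding: Let DP be a set of declassification pairs and s1, s2 states such that s1 ≈_DP s2 and val_{s1}(φ) = val_{s2}(φ) for every (φ, u) ∈ DP. Then for every term or formula t, if s1(y) = s2(y) for every y ∈ deps_{DP,s1}(t), then val_{s1}(t) = val_{s2}(t). -/

import Mathlib

/-!
The proof is a simultaneous structural induction on terms and formulas. If the expression at hand is
declassified in `s1` through a pair `(φ, u)`, then `φ` holds in `s1`, hence also in `s2` because the
two states agree on all release conditions; `DP`-equivalence then gives equal values of `u`, and so
of the expression, which is equivalent to `u` (`DeclassifiedT.eval_eq`, `DeclassifiedF.eval_eq`).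
Otherwise the dependencies of the expression are the union of those of its immediate
subexpressions, so the states agree on each of these sets, and the induction hypotheses show that
all the immediate subexpressions have equal values (`evalT_eq_of_depsT`, `evalF_eq_of_depsF`).
-/

/-- Program variables: a fixed countable set. -/
abbrev PV := ℕ

/-- A state assigns an integer to every program variable. -/
abbrev State := PV → ℤ

mutual
/-- Terms of the imperative language. -/
inductive Term : Type
  | lit : ℤ → Term
  | var : PV → Term
  | add : Term → Term → Term
  | sub : Term → Term → Term
  | mul : Term → Term → Term
  | div : Term → Term → Term
  | mod : Term → Term → Term
  | ite : Formula → Term → Term → Term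

/-- Boolean formulas of the imperative language. -/
inductive Formula : Type
  | tt : Formula
  | ff : Formula
  | eq : Term → Term → Formula
  | lt : Term → Term → Formula
  | le : Term → Term → Formula
  | not : Formula → Formula
  | and : Formula → Formula → Formula
  | or : Formula → Formula → Formula
end

mutual
/-- Standard evaluation of terms. -/
def evalT (s : State) : Term → ℤ
  | .lit n => n
  | .var x => s x
  | .add a b => evalT s a + evalT s b
  | .sub a b => evalT s a - evalT s b
  | .mul a b => evalT s a * evalT s b
  | .div a b => evalT s a / evalT s b
  | .mod a b => evalT s a % evalT s b
  | .ite φ a b => if evalF s φ then evalT s a else evalT s b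

/-- Standard evaluation of formulas. -/
def evalF (s : State) : Formula → Bool
  | .tt => true
  | .ff => false
  | .eq a b => evalT s a == evalT s b
  | .lt a b => decide (evalT s a < evalT s b)
  | .le a b => decide (evalT s a ≤ evalT s b)
  | .not φ => !(evalF s φ)
  | .and φ ψ => evalF s φ && evalF s ψ
  | .or φ ψ => evalF s φ || evalF s ψ
end

/-- Programs of the imperative language. -/
inductive Prog : Type
  | assign : PV → Term → Prog
  | ite : Formula → Prog → Prog → Prog
  | while : Formula → Prog → Prog
  | seq : Prog → Prog → Prog

/-- Big-step operational semantics: `(p , s) ⇓ s'`. -/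
inductive BigStep : Prog → State → State → Prop
  | assign (x : PV) (t : Term) (s : State) :
      BigStep (.assign x t) s (Function.update s x (evalT s t))
  | seq {p q : Prog} {s s' s'' : State} :
      BigStep p s s' → BigStep q s' s'' → BigStep (.seq p q) s s''
  | iteTrue {φ : Formula} {p q : Prog} {s s' : State} :
      evalF s φ = true → BigStep p s s' → BigStep (.ite φ p q) s s'
  | iteFalse {φ : Formula} {p q : Prog} {s s' : State} :
      evalF s φ = false → BigStep q s s' → BigStep (.ite φ p q) s s'
  | whileFalse {φ : Formula} {p : Prog} {s : State} :
      evalF s φ = false → BigStep (.while φ p) s s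
  | whileTrue {φ : Formula} {p : Prog} {s s' s'' : State} :
      evalF s φ = true → BigStep p s s' → BigStep (.while φ p) s' s'' →
      BigStep (.while φ p) s s''

/-- `X` is a dependency set for the term `t` under the program `p`. -/
def DepSet (X : Set PV) (t : Term) (p : Prog) : Prop :=
  ∀ s1 s2 s1' s2' : State, BigStep p s1 s1' → BigStep p s2 s2' →
    (∀ y ∈ X, s1 y = s2 y) → evalT s1' t = evalT s2' t
attribute [local instance] Classical.propDecidable

/-- A declassification pair: a release condition and a released term or formula. -/
structure DeclPair where
  cond : Formula
  rel : Term ⊕ Formula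

/-- `DP`-equivalence of states: they agree on the released information of every
declassification pair whose condition holds in both states. -/
def DPEquiv (DP : Set DeclPair) (s1 s2 : State) : Prop :=
  ∀ dp ∈ DP, evalF s1 dp.cond = true → evalF s2 dp.cond = true →
    match dp.rel with
    | .inl t => evalT s1 t = evalT s2 t
    | .inr φ => evalF s1 φ = evalF s2 φ

/-- `X` is a dependency set for `t` under `p` relative to the declassification pairs `DP`. -/
def DepSetD (DP : Set DeclPair) (X : Set PV) (t : Term) (p : Prog) : Prop :=
  ∀ s1 s2 s1' s2' : State, BigStep p s1 s1' → BigStep p s2 s2' →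
    DPEquiv DP s1 s2 → (∀ y ∈ X, s1 y = s2 y) → evalT s1' t = evalT s2' t

/-- `DP` is guard-closed: `DP`-equivalent states agree on all release conditions. -/
def GuardClosed (DP : Set DeclPair) : Prop :=
  ∀ dp ∈ DP, ∀ s1 s2 : State, DPEquiv DP s1 s2 → evalF s1 dp.cond = evalF s2 dp.cond
/-- The base term `t` is declassified by `DP` in state `s`. -/
def DeclassifiedT (DP : Set DeclPair) (s : State) (t : Term) : Prop :=
  ∃ dp ∈ DP, evalF s dp.cond = true ∧
    ∃ u : Term, dp.rel = .inl u ∧ ∀ st : State, evalT st t = evalT st u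

/-- The base formula `φ` is declassified by `DP` in state `s`. -/
def DeclassifiedF (DP : Set DeclPair) (s : State) (φ : Formula) : Prop :=
  ∃ dp ∈ DP, evalF s dp.cond = true ∧
    ∃ u : Formula, dp.rel = .inr u ∧ ∀ st : State, evalF st φ = evalF st u

mutual
/-- The declassification-aware syntactic dependencies of a base term. -/
noncomputable def depsT (DP : Set DeclPair) (s : State) : Term → Set PV
  | .lit _ => ∅
  | .var y => if DeclassifiedT DP s (.var y) then ∅ else {y}
  | .add a b => if DeclassifiedT DP s (.add a b) then ∅ else depsT DP s a ∪ depsT DP s b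
  | .sub a b => if DeclassifiedT DP s (.sub a b) then ∅ else depsT DP s a ∪ depsT DP s b
  | .mul a b => if DeclassifiedT DP s (.mul a b) then ∅ else depsT DP s a ∪ depsT DP s b
  | .div a b => if DeclassifiedT DP s (.div a b) then ∅ else depsT DP s a ∪ depsT DP s b
  | .mod a b => if DeclassifiedT DP s (.mod a b) then ∅ else depsT DP s a ∪ depsT DP s b
  | .ite φ a b => if DeclassifiedT DP s (.ite φ a b) then ∅
      else depsF DP s φ ∪ depsT DP s a ∪ depsT DP s b

/-- The declassification-aware syntactic dependencies of a base formula. -/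
noncomputable def depsF (DP : Set DeclPair) (s : State) : Formula → Set PV
  | .tt => ∅
  | .ff => ∅
  | .eq a b => if DeclassifiedF DP s (.eq a b) then ∅ else depsT DP s a ∪ depsT DP s b
  | .lt a b => if DeclassifiedF DP s (.lt a b) then ∅ else depsT DP s a ∪ depsT DP s b
  | .le a b => if DeclassifiedF DP s (.le a b) then ∅ else depsT DP s a ∪ depsT DP s b
  | .not φ => if DeclassifiedF DP s (.not φ) then ∅ else depsF DP s φ
  | .and φ ψ => if DeclassifiedF DP s (.and φ ψ) then ∅ else depsF DP s φ ∪ depsF DP s ψ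
  | .or φ ψ => if DeclassifiedF DP s (.or φ ψ) then ∅ else depsF DP s φ ∪ depsF DP s ψ
end

/-- A declassified term has the same value in both states: its release condition transfers from
`s1` to `s2`, so `DP`-equivalence applies to the released term. -/
theorem DeclassifiedT.eval_eq {DP : Set DeclPair} {s1 s2 : State} (hDP : DPEquiv DP s1 s2)
    (hguards : ∀ dp ∈ DP, evalF s1 dp.cond = evalF s2 dp.cond) {t : Term}
    (h : DeclassifiedT DP s1 t) : evalT s1 t = evalT s2 t := by
  obtain ⟨dp, hdp, hc, u, hu, he⟩ := h
  have hrel := hDP dp hdp hc (hguards dp hdp ▸ hc)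
  rw [hu] at hrel
  rw [he s1, he s2]
  exact hrel

/-- The analogue of `DeclassifiedT.eval_eq` for formulas. -/
theorem DeclassifiedF.eval_eq {DP : Set DeclPair} {s1 s2 : State} (hDP : DPEquiv DP s1 s2)
    (hguards : ∀ dp ∈ DP, evalF s1 dp.cond = evalF s2 dp.cond) {φ : Formula}
    (h : DeclassifiedF DP s1 φ) : evalF s1 φ = evalF s2 φ := by
  obtain ⟨dp, hdp, hc, u, hu, he⟩ := h
  have hrel := hDP dp hdp hc (hguards dp hdp ▸ hc)
  rw [hu] at hrel
  rw [he s1, he s2]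
  exact hrel

mutual
theorem evalT_eq_of_depsT {DP : Set DeclPair} {s1 s2 : State} (hDP : DPEquiv DP s1 s2)
    (hguards : ∀ dp ∈ DP, evalF s1 dp.cond = evalF s2 dp.cond) (t : Term)
    (h : ∀ y ∈ depsT DP s1 t, s1 y = s2 y) : evalT s1 t = evalT s2 t :=
  match t with
  | .lit n => by simp only [evalT]
  | .var x => by
    by_cases hd : DeclassifiedT DP s1 (.var x)
    · exact hd.eval_eq hDP hguards
    · simp only [depsT, if_neg hd, Set.mem_singleton_iff] at h
      simpa only [evalT] using h x rfl
  | .add a b => by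
    by_cases hd : DeclassifiedT DP s1 (.add a b)
    · exact hd.eval_eq hDP hguards
    · simp only [depsT, if_neg hd, Set.mem_union] at h
      have ha := evalT_eq_of_depsT hDP hguards a fun y hy => h y (.inl hy)
      have hb := evalT_eq_of_depsT hDP hguards b fun y hy => h y (.inr hy)
      simp only [evalT, ha, hb]
  | .sub a b => by
    by_cases hd : DeclassifiedT DP s1 (.sub a b)
    · exact hd.eval_eq hDP hguards
    · simp only [depsT, if_neg hd, Set.mem_union] at h
      have ha := evalT_eq_of_depsT hDP hguards a fun y hy => h y (.inl hy)
      have hb := evalT_eq_of_depsT hDP hguards b fun y hy => h y (.inr hy)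
      simp only [evalT, ha, hb]
  | .mul a b => by
    by_cases hd : DeclassifiedT DP s1 (.mul a b)
    · exact hd.eval_eq hDP hguards
    · simp only [depsT, if_neg hd, Set.mem_union] at h
      have ha := evalT_eq_of_depsT hDP hguards a fun y hy => h y (.inl hy)
      have hb := evalT_eq_of_depsT hDP hguards b fun y hy => h y (.inr hy)
      simp only [evalT, ha, hb]
  | .div a b => by
    by_cases hd : DeclassifiedT DP s1 (.div a b)
    · exact hd.eval_eq hDP hguards
    · simp only [depsT, if_neg hd, Set.mem_union] at h
      have ha := evalT_eq_of_depsT hDP hguards a fun y hy => h y (.inl hy)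
      have hb := evalT_eq_of_depsT hDP hguards b fun y hy => h y (.inr hy)
      simp only [evalT, ha, hb]
  | .mod a b => by
    by_cases hd : DeclassifiedT DP s1 (.mod a b)
    · exact hd.eval_eq hDP hguards
    · simp only [depsT, if_neg hd, Set.mem_union] at h
      have ha := evalT_eq_of_depsT hDP hguards a fun y hy => h y (.inl hy)
      have hb := evalT_eq_of_depsT hDP hguards b fun y hy => h y (.inr hy)
      simp only [evalT, ha, hb]
  | .ite φ a b => by
    by_cases hd : DeclassifiedT DP s1 (.ite φ a b)
    · exact hd.eval_eq hDP hguards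
    · simp only [depsT, if_neg hd, Set.mem_union] at h
      have hφ := evalF_eq_of_depsF hDP hguards φ fun y hy => h y (.inl (.inl hy))
      have ha := evalT_eq_of_depsT hDP hguards a fun y hy => h y (.inl (.inr hy))
      have hb := evalT_eq_of_depsT hDP hguards b fun y hy => h y (.inr hy)
      simp only [evalT, hφ, ha, hb]

theorem evalF_eq_of_depsF {DP : Set DeclPair} {s1 s2 : State} (hDP : DPEquiv DP s1 s2)
    (hguards : ∀ dp ∈ DP, evalF s1 dp.cond = evalF s2 dp.cond) (φ : Formula)
    (h : ∀ y ∈ depsF DP s1 φ, s1 y = s2 y) : evalF s1 φ = evalF s2 φ :=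
  match φ with
  | .tt => by simp only [evalF]
  | .ff => by simp only [evalF]
  | .eq a b => by
    by_cases hd : DeclassifiedF DP s1 (.eq a b)
    · exact hd.eval_eq hDP hguards
    · simp only [depsF, if_neg hd, Set.mem_union] at h
      have ha := evalT_eq_of_depsT hDP hguards a fun y hy => h y (.inl hy)
      have hb := evalT_eq_of_depsT hDP hguards b fun y hy => h y (.inr hy)
      simp only [evalF, ha, hb]
  | .lt a b => by
    by_cases hd : DeclassifiedF DP s1 (.lt a b)
    · exact hd.eval_eq hDP hguards
    · simp only [depsF, if_neg hd, Set.mem_union] at h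
      have ha := evalT_eq_of_depsT hDP hguards a fun y hy => h y (.inl hy)
      have hb := evalT_eq_of_depsT hDP hguards b fun y hy => h y (.inr hy)
      simp only [evalF, ha, hb]
  | .le a b => by
    by_cases hd : DeclassifiedF DP s1 (.le a b)
    · exact hd.eval_eq hDP hguards
    · simp only [depsF, if_neg hd, Set.mem_union] at h
      have ha := evalT_eq_of_depsT hDP hguards a fun y hy => h y (.inl hy)
      have hb := evalT_eq_of_depsT hDP hguards b fun y hy => h y (.inr hy)
      simp only [evalF, ha, hb]
  | .not ψ => by
    by_cases hd : DeclassifiedF DP s1 (.not ψ)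
    · exact hd.eval_eq hDP hguards
    · simp only [depsF, if_neg hd] at h
      have hψ := evalF_eq_of_depsF hDP hguards ψ fun y hy => h y hy
      simp only [evalF, hψ]
  | .and ψ χ => by
    by_cases hd : DeclassifiedF DP s1 (.and ψ χ)
    · exact hd.eval_eq hDP hguards
    · simp only [depsF, if_neg hd, Set.mem_union] at h
      have hψ := evalF_eq_of_depsF hDP hguards ψ fun y hy => h y (.inl hy)
      have hχ := evalF_eq_of_depsF hDP hguards χ fun y hy => h y (.inr hy)
      simp only [evalF, hψ, hχ]
  | .or ψ χ => by
    by_cases hd : DeclassifiedF DP s1 (.or ψ χ)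
    · exact hd.eval_eq hDP hguards
    · simp only [depsF, if_neg hd, Set.mem_union] at h
      have hψ := evalF_eq_of_depsF hDP hguards ψ fun y hy => h y (.inl hy)
      have hχ := evalF_eq_of_depsF hDP hguards χ fun y hy => h y (.inr hy)
      simp only [evalF, hψ, hχ]
end

/-- Correctness of the declassification-aware dependency encoding. -/
theorem deps_encoding_correct (DP : Set DeclPair) (s1 s2 : State)
    (hDP : DPEquiv DP s1 s2)
    (hguards : ∀ dp ∈ DP, evalF s1 dp.cond = evalF s2 dp.cond) :
    (∀ t : Term, (∀ y ∈ depsT DP s1 t, s1 y = s2 y) → evalT s1 t = evalT s2 t) ∧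
    (∀ φ : Formula, (∀ y ∈ depsF DP s1 φ, s1 y = s2 y) → evalF s1 φ = evalF s2 φ) := by
  exact ⟨evalT_eq_of_depsT hDP hguards, evalF_eq_of_depsF hDP hguards⟩
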